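/- Fix integers d ≥ 3 and 2 ≤ j ≤ d−1 and let P = P(d,j) be the convex hull of 0, e₁,…,e_{d−1}, and e₁+⋯+e_j + j·e_d in ℝ^d. Then for every integer k with 1 ≤ k < j, the dilated polytope kP is not very ample. Combined with μ_Ehr(P) = j and the general inequalities, all six invariants μ_va, μ_midp, μ_idp, μ_Hilb, μ_hole, μ_Ehr of P equal j. -/

import Mathlib

open scoped BigOperators Pointwise

/-- Points of `ℝ^N`. -/
abbrev Pt (N : ℕ) := Fin N → ℝ

/-- A point has integer coordinates. -/
def IsLat {N : ℕ} (x : Pt N) : Prop := ∀ i, ∃ z : ℤ, x i = (z : ℝ)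

/-- Lattice points of a set. -/
def latPts {N : ℕ} (P : Set (Pt N)) : Set (Pt N) := {x ∈ P | IsLat x}

/-- The dilated polytope `kP`. -/
def dil {N : ℕ} (k : ℕ) (P : Set (Pt N)) : Set (Pt N) := (k : ℝ) • P

/-- `α` is a sum of `k` lattice points of `P`. -/
def DecomposesIn {N : ℕ} (P : Set (Pt N)) (k : ℕ) (α : Pt N) : Prop :=
  ∃ f : Fin k → Pt N, (∀ i, f i ∈ latPts P) ∧ α = ∑ i, f i

/-- The integer decomposition property. -/
def HasIDP {N : ℕ} (P : Set (Pt N)) : Prop :=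
  ∀ k : ℕ, 0 < k → ∀ α ∈ latPts (dil k P), DecomposesIn P k α

/-- Very ampleness: decomposition holds for all sufficiently large `k`. -/
def VeryAmple {N : ℕ} (P : Set (Pt N)) : Prop :=
  ∃ k₀ : ℕ, ∀ k, k₀ ≤ k → ∀ α ∈ latPts (dil k P), DecomposesIn P k α

/-- An integral convex polytope: the convex hull of finitely many lattice points
(which include all its vertices). -/
def IsIntegralPolytope {N : ℕ} (P : Set (Pt N)) : Prop :=
  ∃ V : Finset (Pt N), (∀ v ∈ V, IsLat v) ∧ P = convexHull ℝ (V : Set (Pt N))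

/-- Dimension of a polytope: the rank of the direction of its affine span. -/
noncomputable def polyDim {N : ℕ} (P : Set (Pt N)) : ℕ :=
  Module.finrank ℝ (affineSpan ℝ P).direction

/-- Lattice points of the cone `C(P) ⊂ ℝ^{N+1}` generated by `P̃ = P × {1}`;
a point of `ℝ^{N+1}` is represented as a pair `(x, deg)`. -/
def coneLat {N : ℕ} (P : Set (Pt N)) : Set (Pt N × ℝ) :=
  {p | (∃ (m : ℕ) (c : Fin m → ℝ) (w : Fin m → Pt N),
        (∀ i, 0 ≤ c i ∧ w i ∈ P) ∧ p.1 = ∑ i, c i • w i ∧ p.2 = ∑ i, c i)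
    ∧ IsLat p.1 ∧ ∃ z : ℤ, p.2 = (z : ℝ)}

/-- The monoid `ℤ_{≥0}(P̃ ∩ ℤ^{N+1})` generated by the degree-one lattice points of the cone. -/
def genMonoid {N : ℕ} (P : Set (Pt N)) : Set (Pt N × ℝ) :=
  {p | ∃ (m : ℕ) (f : Fin m → Pt N), (∀ i, f i ∈ latPts P) ∧
        p.1 = ∑ i, f i ∧ p.2 = (m : ℝ)}

/-- `H` is the minimal Hilbert basis of the cone `C(P)`. -/
def IsMinHilbertBasis {N : ℕ} (P : Set (Pt N)) (H : Set (Pt N × ℝ)) : Prop :=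
  (H.Finite ∧ H ⊆ coneLat P ∧
      coneLat P ⊆ (AddSubmonoid.closure H : Set (Pt N × ℝ))) ∧
  ∀ H' : Set (Pt N × ℝ),
    (H'.Finite ∧ H' ⊆ coneLat P ∧
      coneLat P ⊆ (AddSubmonoid.closure H' : Set (Pt N × ℝ))) → H ⊆ H'

/-- `v` lists the vertices of an empty `d`-simplex contained in `P`. -/
def EmptySimplexIn {N : ℕ} (P : Set (Pt N)) (d : ℕ) (v : Fin (d+1) → Pt N) : Prop :=
  (∀ i, v i ∈ latPts P) ∧ AffineIndependent ℝ v ∧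
    ∀ x ∈ convexHull ℝ (Set.range v), IsLat x → x ∈ Set.range v

/-- `Box(S)` of a simplex with vertex list `v`: lattice points
`Σ rᵢ (vᵢ, 1)` with `0 ≤ rᵢ < 1`. -/
def boxSimplex {N d : ℕ} (v : Fin (d+1) → Pt N) : Set (Pt N × ℝ) :=
  {p | ∃ r : Fin (d+1) → ℝ, (∀ i, 0 ≤ r i ∧ r i < 1) ∧
      p.1 = ∑ i, r i • v i ∧ p.2 = ∑ i, r i ∧ IsLat p.1 ∧ ∃ z : ℤ, p.2 = (z : ℝ)}

/-- `Box(P)`: holes of `P`, i.e. box points of empty `d`-simplices in `P` that are not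
nonnegative integer combinations of `P̃ ∩ ℤ^{N+1}`. -/
def boxP {N : ℕ} (P : Set (Pt N)) (d : ℕ) : Set (Pt N × ℝ) :=
  (⋃ v ∈ {v : Fin (d+1) → Pt N | EmptySimplexIn P d v}, boxSimplex v) \ genMonoid P

/-- Ehrhart counting function `|nP ∩ ℤ^N|`. -/
noncomputable def ehr {N : ℕ} (P : Set (Pt N)) (n : ℕ) : ℕ := (latPts (dil n P)).ncard

/-- The `δ`-vector of a `d`-dimensional polytope, via finite differences of the
Ehrhart counting function. -/
noncomputable def deltaVec {N : ℕ} (P : Set (Pt N)) (d i : ℕ) : ℤ :=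
  ∑ j ∈ Finset.range (i+1), (-1)^j * ((d+1).choose j) * (ehr P (i - j) : ℤ)

/-- Vertex set of the simplex `P(d,j)`: `0`, `e₁, …, e_{d-1}`, and
`e₁ + ⋯ + e_j + j·e_d`. -/
def Vdj (d j : ℕ) : Set (Pt d) :=
  {0} ∪ {x : Pt d | ∃ k : Fin d, (k : ℕ) < d - 1 ∧ x = fun l => if l = k then (1:ℝ) else 0}
    ∪ {(fun k => (if (k : ℕ) + 1 ≤ j then (1:ℝ) else 0) + (if (k : ℕ) = d - 1 then (j:ℝ) else 0) : Pt d)}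

/-- The simplex `P(d,j) ⊂ ℝ^d`. -/
def Pdj (d j : ℕ) : Set (Pt d) := convexHull ℝ (Vdj d j)

/-- Non-origin vertices of `P(m+1,j)`. -/
noncomputable def V0 (m j : ℕ) (k : Fin (m+1)) : Pt (m+1) := fun l =>
  if (k : ℕ) = m then (if (l : ℕ) = m then (j:ℝ) else if (l : ℕ) < j then 1 else 0)
  else if l = k then 1 else 0

/-- All vertices of `P(m+1,j)`. -/
noncomputable def VV (m j : ℕ) : Fin (m+1+1) → Pt (m+1) := Fin.cons 0 (V0 m j)

/-- Coordinates with respect to `V0`. -/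
noncomputable def cc (m j : ℕ) (k : Fin (m+1)) : Pt (m+1) →ₗ[ℝ] ℝ where
  toFun x := if (k : ℕ) = m then x (Fin.last m) / j
    else if (k : ℕ) < j then x k - x (Fin.last m) / j else x k
  map_add' x y := by
    simp only [Pi.add_apply]; split_ifs <;> ring
  map_smul' c x := by
    simp only [Pi.smul_apply, smul_eq_mul, RingHom.id_apply]; split_ifs <;> ring

lemma cc_apply (m j : ℕ) (k : Fin (m+1)) (x : Pt (m+1)) :
    cc m j k x = if (k : ℕ) = m then x (Fin.last m) / j
    else if (k : ℕ) < j then x k - x (Fin.last m) / j else x k := rfl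

/-- Homogeneous barycentric coordinates. -/
noncomputable def LL (m j : ℕ) (e : Fin (m+1+1)) (p : Pt (m+1) × ℝ) : ℝ :=
  Fin.cases (p.2 - ∑ k, cc m j k p.1) (fun k => cc m j k p.1) e

lemma LL_zero (m j : ℕ) (p : Pt (m+1) × ℝ) : LL m j 0 p = p.2 - ∑ k, cc m j k p.1 := rfl
lemma LL_succ (m j : ℕ) (k : Fin (m+1)) (p : Pt (m+1) × ℝ) : LL m j k.succ p = cc m j k p.1 := rfl

lemma LL_add (m j : ℕ) (e : Fin (m+1+1)) (p q : Pt (m+1) × ℝ) :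
    LL m j e (p + q) = LL m j e p + LL m j e q := by
  cases e using Fin.cases with
  | zero => simp only [LL_zero, Prod.fst_add, Prod.snd_add, map_add, Finset.sum_add_distrib]; ring
  | succ k => simp [LL_succ]

lemma LL_smul (m j : ℕ) (e : Fin (m+1+1)) (c : ℝ) (p : Pt (m+1) × ℝ) :
    LL m j e (c • p) = c * LL m j e p := by
  cases e using Fin.cases with
  | zero => simp only [LL_zero, Prod.smul_fst, Prod.smul_snd, map_smul, smul_eq_mul, ← Finset.mul_sum]; ring
  | succ k => simp [LL_succ]

/-- `LL` as a linear map. -/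
noncomputable def LM (m j : ℕ) (e : Fin (m+1+1)) : Pt (m+1) × ℝ →ₗ[ℝ] ℝ where
  toFun := LL m j e
  map_add' := LL_add m j e
  map_smul' := LL_smul m j e

lemma LM_apply (m j : ℕ) (e : Fin (m+1+1)) (p) : LM m j e p = LL m j e p := rfl

lemma sum_cc_V0 (m j : ℕ) (hj : 0 < j) (_hjm : j ≤ m) (x : Pt (m+1)) :
    ∑ k, cc m j k x • V0 m j k = x := by
  have hj' : (j:ℝ) ≠ 0 := by positivity
  rw [Fin.sum_univ_castSucc]
  funext l
  simp only [Pi.add_apply, Finset.sum_apply, Pi.smul_apply, smul_eq_mul, V0, cc_apply]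
  have h1 : ∀ i : Fin m, ((i.castSucc : Fin (m+1)) : ℕ) ≠ m := fun i => by simp [i.2.ne]
  simp only [h1, if_false, Fin.val_last, if_true]
  cases l using Fin.lastCases with
  | last =>
    have : ∀ i : Fin m, Fin.last m ≠ i.castSucc := fun i => (Fin.castSucc_lt_last i).ne'
    simp [this]; field_simp
  | cast i =>
    simp [Fin.castSucc_inj]
    have := i.2.ne
    simp only [this, if_false]
    split_ifs <;> ring

lemma cc_V0 (m j : ℕ) (hj : 0 < j) (hjm : j ≤ m) (k l : Fin (m+1)) :
    cc m j k (V0 m j l) = if k = l then 1 else 0 := by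
  have hj' : (j:ℝ) ≠ 0 := by positivity
  simp only [cc_apply, V0, Fin.val_last, if_true, Fin.ext_iff]
  by_cases hl : (l:ℕ) = m <;> by_cases hk : (k:ℕ) = m
  · simp [hl, hk, hj']
  · have : (k:ℕ) ≠ l := by omega
    simp [hl, hk, hj']
    split_ifs <;> norm_num
  · have : (k:ℕ) ≠ l := by omega
    have : (m:ℕ) ≠ l := by omega
    simp [hl, hk, this]
  · have : (m:ℕ) ≠ l := by omega
    simp [hl, hk, this]

lemma sum_LL (m j : ℕ) (p : Pt (m+1) × ℝ) : ∑ e, LL m j e p = p.2 := by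
  rw [Fin.sum_univ_succ]; simp [LL_zero, LL_succ]

lemma sum_LL_VV (m j : ℕ) (hj : 0 < j) (hjm : j ≤ m) (p : Pt (m+1) × ℝ) :
    ∑ e, LL m j e p • VV m j e = p.1 := by
  rw [Fin.sum_univ_succ]; simp [VV, LL_succ, sum_cc_V0 m j hj hjm]

lemma LL_VV (m j : ℕ) (hj : 0 < j) (hjm : j ≤ m) (e f : Fin (m+1+1)) :
    LL m j e (VV m j f, 1) = if e = f then 1 else 0 := by
  cases e using Fin.cases with
  | zero =>
    cases f using Fin.cases with
    | zero => simp [LL_zero, VV]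
    | succ k => simp [LL_zero, VV, cc_V0 m j hj hjm, (Fin.succ_ne_zero k).symm]
  | succ i =>
    cases f using Fin.cases with
    | zero => simp [LL_succ, VV]
    | succ k => simp [LL_succ, VV, cc_V0 m j hj hjm]

lemma range_VV (m j : ℕ) (hjm : j ≤ m) : Set.range (VV m j) = Vdj (m+1) j := by
  have hw : V0 m j (Fin.last m) = fun k : Fin (m+1) => (if (k : ℕ) + 1 ≤ j then (1:ℝ) else 0) +
      (if (k : ℕ) = m + 1 - 1 then (j:ℝ) else 0) := by
    funext l
    simp only [V0, Fin.val_last, if_true, Nat.add_sub_cancel]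
    by_cases hl : (l:ℕ) = m
    · have : ¬ (m + 1 ≤ j) := by omega
      simp [hl, this]
    · by_cases h2 : (l:ℕ) < j
      · have : (l:ℕ) + 1 ≤ j := h2
        simp [hl, this, h2]
      · have : ¬ ((l:ℕ) + 1 ≤ j) := h2
        simp [hl, this, h2]
  have hk : ∀ k : Fin (m+1), (k:ℕ) < m → V0 m j k = fun l => if l = k then (1:ℝ) else 0 := by
    intro k hk; funext l; simp [V0, hk.ne]
  ext x
  simp only [Vdj, ← hw, Set.mem_range, Set.mem_union, Set.mem_singleton_iff, Set.mem_ofPred_eq]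
  constructor
  · rintro ⟨e, rfl⟩
    cases e using Fin.cases with
    | zero => left; left; rfl
    | succ k =>
      by_cases h : (k:ℕ) < m
      · left; right; exact ⟨k, h, hk k h⟩
      · right
        have : k = Fin.last m := by ext; simp; omega
        subst this; rfl
  · rintro ((rfl | ⟨k, h, rfl⟩) | rfl)
    · exact ⟨0, rfl⟩
    · exact ⟨k.succ, by rw [← hk k h]; rfl⟩
    · exact ⟨(Fin.last m).succ, rfl⟩

lemma LL_nonneg_of_mem (m j : ℕ) (hj : 0 < j) (hjm : j ≤ m) {x : Pt (m+1)}
    (hx : x ∈ Pdj (m+1) j) (e) : 0 ≤ LL m j e (x, 1) := by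
  have : Pdj (m+1) j ⊆ {x | 0 ≤ LL m j e (x, 1)} := by
    apply convexHull_min
    · rw [← range_VV m j hjm]
      rintro _ ⟨f, rfl⟩
      simp only [Set.mem_ofPred_eq, LL_VV m j hj hjm]; split_ifs <;> norm_num
    · intro x hx y hy a b ha hb hab
      simp only [Set.mem_ofPred_eq] at *
      have : ((a • x + b • y, 1) : Pt (m+1) × ℝ) = a • (x, 1) + b • (y, 1) := by
        ext <;> simp [hab]
      rw [this, LL_add, LL_smul, LL_smul]; positivity
  exact this hx

lemma mem_dil_iff (m j : ℕ) (hj : 0 < j) (hjm : j ≤ m) (n : ℕ) (x : Pt (m+1)) :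
    x ∈ dil n (Pdj (m+1) j) ↔ ∀ e, 0 ≤ LL m j e (x, n) := by
  constructor
  · rintro ⟨y, hy, rfl⟩ e
    have := LL_nonneg_of_mem m j hj hjm hy e
    have h2 : (((n:ℝ) • y, (n:ℝ)) : Pt (m+1) × ℝ) = (n:ℝ) • (y, 1) := by ext <;> simp
    simp only
    rw [h2, LL_smul]; positivity
  · intro h
    have hs := sum_LL m j (x, (n:ℝ))
    have hv := sum_LL_VV m j hj hjm (x, (n:ℝ))
    have hV : ∀ e, VV m j e ∈ Pdj (m+1) j := fun e => subset_convexHull ℝ _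
      (by rw [← range_VV m j hjm]; exact ⟨e, rfl⟩)
    rcases Nat.eq_zero_or_pos n with rfl | hn
    · refine ⟨VV m j 0, hV 0, ?_⟩
      simp only [Nat.cast_zero, zero_smul] at *
      rw [← hv]; symm
      apply Finset.sum_eq_zero
      intro e he
      have := (Finset.sum_eq_zero_iff_of_nonneg (fun e _ => h e)).1 hs e he
      rw [this, zero_smul]
    · have hn' : (n:ℝ) ≠ 0 := by positivity
      refine ⟨∑ e, ((n:ℝ)⁻¹ * LL m j e (x, n)) • VV m j e, ?_, ?_⟩
      · apply (convex_convexHull ℝ _).sum_mem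
        · intro e _; have := h e; positivity
        · rw [← Finset.mul_sum, hs]; simp [hn']
        · intro e _; exact hV e
      · simp only [mul_smul, ← Finset.smul_sum, hv]
        simp [smul_smul, hn']

lemma Pdj_eq (d j : ℕ) : dil 1 (Pdj d j) = Pdj d j := by simp [dil]

lemma dil_dil {N : ℕ} (a b : ℕ) (P : Set (Pt N)) : dil a (dil b P) = dil (a*b) P := by
  simp [dil, smul_smul]

/-- The exceptional lattice points. -/
noncomputable def bb (m j r : ℕ) : Pt (m+1) := fun k =>
  if (k:ℕ) = m then (r:ℝ) else if (k:ℕ) < j ∧ r ≠ 0 then 1 else 0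

/-- Degree of the exceptional points. -/
def ss (j r : ℕ) : ℕ := if r = 0 then 0 else j + 1 - r

lemma cc_bb (m j r : ℕ) (k : Fin (m+1)) : cc m j k (bb m j r) =
    if (k:ℕ) = m then (r:ℝ)/j else if (k:ℕ) < j ∧ r ≠ 0 then 1 - (r:ℝ)/j else 0 := by
  simp only [cc_apply, bb, Fin.val_last, if_true]
  by_cases h1 : (k:ℕ) = m <;> by_cases h2 : (k:ℕ) < j <;> by_cases h3 : r = 0 <;> simp [*]

lemma sum_cc_bb (m j r : ℕ) (hr : r ≠ 0) (hjm : j ≤ m) :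
    ∑ k, cc m j k (bb m j r) = r/j + j * (1 - (r:ℝ)/j) := by
  rw [Fin.sum_univ_castSucc]
  simp only [cc_bb, Fin.val_last, if_true, Fin.val_castSucc, hr, ne_eq, not_false_eq_true, and_true]
  have : ∀ i : Fin m, (i:ℕ) ≠ m := fun i => i.2.ne
  simp only [this, if_false]
  rw [Fin.sum_univ_eq_sum_range (fun i => if i < j then 1 - (r:ℝ)/j else 0) m]
  rw [← Finset.sum_filter]
  have : (Finset.range m).filter (· < j) = Finset.range j := by
    ext; simp; omega
  rw [this]; simp; ring

lemma LL_bb (m j r : ℕ) (hr : r < j) (hjm : j ≤ m) (e) :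
    0 ≤ LL m j e (bb m j r, ss j r) ∧ LL m j e (bb m j r, ss j r) < 1 := by
  have hj' : (0:ℝ) < j := by have : 0 < j := by omega
                             exact_mod_cast this
  have hrj : (r:ℝ)/j < 1 := by rw [div_lt_one hj']; exact_mod_cast hr
  have hr0 : (0:ℝ) ≤ (r:ℝ)/j := by positivity
  cases e using Fin.cases with
  | succ k =>
    rw [LL_succ]; simp only [cc_bb]
    split_ifs with h1 h2
    · exact ⟨hr0, hrj⟩
    · have : (0:ℝ) < r := by have := h2.2; positivity
      have : 0 < (r:ℝ)/j := by positivity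
      constructor <;> linarith
    · norm_num
  | zero =>
    rw [LL_zero]
    by_cases h : r = 0
    · subst h; simp [cc_bb, ss]
    · simp only [sum_cc_bb m j r h hjm, ss, h, if_false]
      have : (0:ℝ) < r := by positivity
      have h3: 0 < (r:ℝ)/j := by positivity
      rw [Nat.cast_sub (by omega)]
      have : (j:ℝ) * (r/j) = r := by field_simp
      push_cast
      constructor <;> nlinarith

lemma isLat_VV (m j : ℕ) (e) : IsLat (VV m j e) := by
  intro i
  cases e using Fin.cases with
  | zero => exact ⟨0, by simp [VV]⟩
  | succ k =>
    simp only [VV, Fin.cons_succ, V0]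
    split_ifs
    · exact ⟨j, by simp⟩
    · exact ⟨1, by simp⟩
    · exact ⟨0, by simp⟩
    · exact ⟨1, by simp⟩
    · exact ⟨0, by simp⟩

lemma isLat_bb (m j r : ℕ) : IsLat (bb m j r) := by
  intro i
  simp only [bb]
  split_ifs
  · exact ⟨r, by simp⟩
  · exact ⟨1, by simp⟩
  · exact ⟨0, by simp⟩

lemma IsLat.add {N : ℕ} {x y : Pt N} (hx : IsLat x) (hy : IsLat y) : IsLat (x + y) := by
  intro i
  obtain ⟨a, ha⟩ := hx i
  obtain ⟨b, hb⟩ := hy i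
  exact ⟨a + b, by simp [ha, hb]⟩

lemma IsLat.sub {N : ℕ} {x y : Pt N} (hx : IsLat x) (hy : IsLat y) : IsLat (x - y) := by
  intro i
  obtain ⟨a, ha⟩ := hx i
  obtain ⟨b, hb⟩ := hy i
  exact ⟨a - b, by simp [ha, hb]⟩

lemma IsLat.sum {N : ℕ} {ι : Type*} (s : Finset ι) {f : ι → Pt N} (h : ∀ i ∈ s, IsLat (f i)) :
    IsLat (∑ i ∈ s, f i) := by
  classical
  induction s using Finset.induction_on with
  | empty => intro i; exact ⟨0, by simp⟩
  | insert a s ha ih =>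
    rw [Finset.sum_insert ha]
    exact (h a (by simp)).add (ih fun i hi => h i (by simp [hi]))

lemma IsLat.nat_smul {N : ℕ} {x : Pt N} (hx : IsLat x) (n : ℕ) : IsLat ((n:ℝ) • x) := by
  intro i
  obtain ⟨a, ha⟩ := hx i
  exact ⟨n * a, by simp [ha]⟩

/-- General lattice point in normal form. -/
noncomputable def pp (m j r : ℕ) (a : Fin (m+1+1) → ℕ) : Pt (m+1) :=
  bb m j r + ∑ e, (a e : ℝ) • VV m j e

lemma LL_pp (m j : ℕ) (hj : 0 < j) (hjm : j ≤ m) (r : ℕ) (a : Fin (m+1+1) → ℕ) (e) :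
    LL m j e (pp m j r a, ((ss j r + ∑ e, a e : ℕ) : ℝ)) = LL m j e (bb m j r, ss j r) + a e := by
  have : ((pp m j r a, ((ss j r + ∑ e, a e : ℕ) : ℝ)) : Pt (m+1) × ℝ) =
      (bb m j r, (ss j r : ℝ)) + ∑ e, (a e : ℝ) • ((VV m j e, 1) : Pt (m+1) × ℝ) := by
    refine Prod.ext ?_ ?_
    · simp [pp, Prod.fst_sum]
    · simp [Prod.snd_sum]
  rw [this, ← LM_apply, map_add, map_sum]
  simp only [map_smul, LM_apply, LL_VV m j hj hjm]
  simp

lemma int_LL (m j : ℕ) (hj : 0 < j) {y : Pt (m+1)} (hy : IsLat y) (n : ℤ)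
    (hq : ∃ q : ℤ, y (Fin.last m) = j * q) (e) : ∃ z : ℤ, LL m j e (y, n) = z := by
  have hj' : (j:ℝ) ≠ 0 := by positivity
  obtain ⟨q, hq⟩ := hq
  have hc : ∀ k, ∃ z : ℤ, cc m j k y = z := by
    intro k
    obtain ⟨a, ha⟩ := hy k
    rw [cc_apply, hq, ha, mul_div_cancel_left₀ _ hj']
    split_ifs
    · exact ⟨q, rfl⟩
    · exact ⟨a - q, by simp⟩
    · exact ⟨a, rfl⟩
  choose z hz using hc
  cases e using Fin.cases with
  | zero => exact ⟨n - ∑ k, z k, by simp [LL_zero, hz]⟩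
  | succ k => exact ⟨z k, by simp [LL_succ, hz]⟩

lemma mem_lat_iff (m j : ℕ) (hj : 0 < j) (hjm : j ≤ m) (n : ℕ) (x : Pt (m+1)) :
    x ∈ latPts (dil n (Pdj (m+1) j)) ↔
      ∃ r < j, ∃ a : Fin (m+1+1) → ℕ, ss j r + ∑ e, a e = n ∧ x = pp m j r a := by
  have hj' : (j:ℝ) ≠ 0 := by positivity
  constructor
  · rintro ⟨hx, hl⟩
    rw [mem_dil_iff m j hj hjm] at hx
    obtain ⟨h, hh⟩ := hl (Fin.last m)
    have h0 : 0 ≤ h := by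
      have := hx (Fin.last m).succ
      simp only [LL_succ, cc_apply, Fin.val_last, if_true, hh] at this
      have h2 : (h:ℝ) = j * (h/j) := by field_simp
      have : (0:ℝ) ≤ h := by rw [h2]; positivity
      exact_mod_cast this
    lift h to ℕ using h0
    have hr : h % j < j := Nat.mod_lt _ hj
    set r := h % j with hrdef
    have hyl : IsLat (x - bb m j r) := hl.sub (isLat_bb m j r)
    obtain ⟨q, hq⟩ : ∃ q : ℕ, h = r + j * q := ⟨h / j, (Nat.mod_add_div h j).symm⟩
    have hint := int_LL m j hj hyl (n - ss j r : ℤ) ⟨q, by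
      simp only [Pi.sub_apply, hh, bb, Fin.val_last, if_true]
      have h3 : (h:ℝ) = r + j * q := by exact_mod_cast hq
      push_cast
      linarith⟩
    have heq : ∀ e, LL m j e (x, n) = LL m j e (bb m j r, ss j r) +
        LL m j e (x - bb m j r, ((n - ss j r : ℤ) : ℝ)) := by
      intro e; rw [← LL_add]; congr 1; ext <;> simp
    have hnat : ∀ e, ∃ a : ℕ, LL m j e (x - bb m j r, ((n - ss j r : ℤ) : ℝ)) = a := by
      intro e
      obtain ⟨z, hz⟩ := hint e
      have h1 := hx e
      rw [heq, hz] at h1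
      have h2 := (LL_bb m j r hr hjm e).2
      have : (-1:ℝ) < z := by linarith
      have : (-1:ℤ) < z := by exact_mod_cast this
      lift z to ℕ using by omega
      exact ⟨z, by simpa using hz⟩
    choose a ha using hnat
    refine ⟨r, hr, a, ?_, ?_⟩
    · have := sum_LL m j (x - bb m j r, ((n - ss j r : ℤ) : ℝ))
      simp only [ha] at this
      have : ((∑ e, a e : ℕ) : ℤ) = n - ss j r := by exact_mod_cast this
      omega
    · have := sum_LL_VV m j hj hjm (x - bb m j r, ((n - ss j r : ℤ) : ℝ))
      simp only [ha] at this
      rw [pp, this]; simp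
  · rintro ⟨r, hr, a, rfl, rfl⟩
    refine ⟨?_, ?_⟩
    · rw [mem_dil_iff m j hj hjm]
      intro e
      rw [LL_pp m j hj hjm]
      have := (LL_bb m j r hr hjm e).1
      positivity
    · exact (isLat_bb m j r).add (IsLat.sum _ fun e _ => (isLat_VV m j e).nat_smul _)

lemma last_pp (m j : ℕ) (hj : 0 < j) (hjm : j ≤ m) (r : ℕ) (a : Fin (m+1+1) → ℕ) :
    pp m j r a (Fin.last m) = ((r + j * a (Fin.last m).succ : ℕ) : ℝ) := by
  have hj' : (j:ℝ) ≠ 0 := by positivity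
  have := LL_pp m j hj hjm r a (Fin.last m).succ
  simp only [LL_succ, cc_apply, Fin.val_last, if_true, bb] at this
  field_simp at this
  push_cast; linarith

lemma pp_add_single (m j r : ℕ) (a : Fin (m+1+1) → ℕ) (e) :
    pp m j r (a + Pi.single e 1) = pp m j r a + VV m j e := by
  simp only [pp, Pi.add_apply, Nat.cast_add, add_smul, Finset.sum_add_distrib, add_assoc]
  congr 2
  rw [Finset.sum_eq_single e]
  · simp
  · intro f _ hf; simp [hf]
  · simp

lemma ss_le (j r : ℕ) (hr : r < j) : ss j r ≤ j := by
  unfold ss; split_ifs <;> omega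

lemma key (m j : ℕ) (hj : 0 < j) (hjm : j ≤ m) (N : ℕ) (hN : j ≤ N) (x : Pt (m+1))
    (hx : x ∈ latPts (dil (N+1) (Pdj (m+1) j))) :
    ∃ e, ∃ y ∈ latPts (dil N (Pdj (m+1) j)), x = y + VV m j e := by
  rw [mem_lat_iff m j hj hjm] at hx
  obtain ⟨r, hr, a, hs, rfl⟩ := hx
  have := ss_le j r hr
  obtain ⟨e, he⟩ : ∃ e, a e ≠ 0 := by
    by_contra! h
    simp [h] at hs; omega
  have ha : a = (a - Pi.single e 1) + Pi.single e 1 := by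
    funext f
    by_cases h : f = e
    · subst h; simp; omega
    · simp [h]
  generalize a - Pi.single e 1 = a' at ha
  subst ha
  refine ⟨e, pp m j r a', ?_, pp_add_single m j r a' e⟩
  rw [mem_lat_iff m j hj hjm]
  refine ⟨r, hr, a', ?_, rfl⟩
  simp [Finset.sum_add_distrib] at hs
  omega

lemma lat_add (m j : ℕ) (hj : 0 < j) (hjm : j ≤ m) {a b : ℕ} {x y : Pt (m+1)}
    (hx : x ∈ latPts (dil a (Pdj (m+1) j))) (hy : y ∈ latPts (dil b (Pdj (m+1) j))) :
    x + y ∈ latPts (dil (a+b) (Pdj (m+1) j)) := by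
  refine ⟨?_, hx.2.add hy.2⟩
  have h1 := (mem_dil_iff m j hj hjm _ _).1 hx.1
  have h2 := (mem_dil_iff m j hj hjm _ _).1 hy.1
  rw [mem_dil_iff m j hj hjm]
  intro e
  have : ((x + y, ((a + b : ℕ) : ℝ)) : Pt (m+1) × ℝ) = (x, (a:ℝ)) + (y, (b:ℝ)) := by
    ext <;> simp
  rw [this, LL_add]
  exact add_nonneg (h1 e) (h2 e)

lemma VV_mem (m j : ℕ) (hjm : j ≤ m) (e) : VV m j e ∈ Pdj (m+1) j :=
  subset_convexHull ℝ _ (by rw [← range_VV m j hjm]; exact ⟨e, rfl⟩)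

lemma VV_lat (m j : ℕ) (hjm : j ≤ m) (e) : VV m j e ∈ latPts (dil 1 (Pdj (m+1) j)) := by
  rw [Pdj_eq]; exact ⟨VV_mem m j hjm e, isLat_VV m j e⟩

lemma zero_lat (m j : ℕ) (hj : 0 < j) (hjm : j ≤ m) : (0 : Pt (m+1)) ∈ latPts (dil 0 (Pdj (m+1) j)) := by
  rw [mem_lat_iff m j hj hjm]
  refine ⟨0, hj, 0, by simp [ss], ?_⟩
  funext k; simp [pp, bb]

lemma peel (m j : ℕ) (hj : 0 < j) (hjm : j ≤ m) (N s : ℕ) (hN : j ≤ N) (x : Pt (m+1))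
    (hx : x ∈ latPts (dil (N+s) (Pdj (m+1) j))) :
    ∃ y ∈ latPts (dil N (Pdj (m+1) j)), ∃ u ∈ latPts (dil s (Pdj (m+1) j)), x = y + u := by
  induction s generalizing x with
  | zero => exact ⟨x, hx, 0, zero_lat m j hj hjm, by simp⟩
  | succ s ih =>
    obtain ⟨e, z, hz, rfl⟩ := key m j hj hjm (N+s) (by omega) x hx
    obtain ⟨y, hy, u, hu, rfl⟩ := ih z hz
    exact ⟨y, hy, u + VV m j e, lat_add m j hj hjm hu (VV_lat m j hjm e), by rw [add_assoc]⟩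

lemma hasIDP_of_le (m j : ℕ) (hj : 0 < j) (hjm : j ≤ m) (n : ℕ) (hn : j ≤ n) :
    HasIDP (dil n (Pdj (m+1) j)) := by
  intro k hk
  induction k with
  | zero => omega
  | succ k ih =>
    intro α hα
    rcases Nat.eq_zero_or_pos k with rfl | hk'
    · refine ⟨fun _ => α, fun _ => ?_, by simp⟩
      rw [dil_dil] at hα; simpa using hα
    · rw [dil_dil] at hα
      have hle : j ≤ k * n := hn.trans (Nat.le_mul_of_pos_left n hk')
      obtain ⟨y, hy, u, hu, rfl⟩ := peel m j hj hjm (k*n) n hle α (by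
        rwa [show k * n + n = (k+1)*n by ring])
      rw [← dil_dil] at hy
      obtain ⟨f, hf, rfl⟩ := ih hk' y hy
      refine ⟨Fin.snoc f u, ?_, ?_⟩
      · intro i
        cases i using Fin.lastCases with
        | last => simpa using hu
        | cast i => simpa using hf i
      · rw [Fin.sum_univ_castSucc]; simp

lemma height_nat (m j : ℕ) (hj : 0 < j) (hjm : j ≤ m) {n : ℕ} {x : Pt (m+1)}
    (hx : x ∈ latPts (dil n (Pdj (m+1) j))) : ∃ h : ℕ, x (Fin.last m) = h := by
  rw [mem_lat_iff m j hj hjm] at hx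
  obtain ⟨r, hr, a, hs, rfl⟩ := hx
  exact ⟨_, last_pp m j hj hjm r a⟩

lemma height_one (m j : ℕ) (hj : 2 ≤ j) (hjm : j ≤ m) {n : ℕ} {x : Pt (m+1)}
    (hx : x ∈ latPts (dil n (Pdj (m+1) j))) (h1 : x (Fin.last m) = 1) : j ≤ n := by
  rw [mem_lat_iff m j (by omega) hjm] at hx
  obtain ⟨r, hr, a, hs, rfl⟩ := hx
  rw [last_pp m j (by omega) hjm] at h1
  have h1 : r + j * a (Fin.last m).succ = 1 := by exact_mod_cast h1
  have : a (Fin.last m).succ = 0 := by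
    by_contra h
    have := Nat.le_mul_of_pos_right j (Nat.pos_of_ne_zero h)
    omega
  rw [this] at h1
  have : r = 1 := by omega
  subst this
  simp [ss] at hs
  omega

lemma bb_last (m j r : ℕ) : bb m j r (Fin.last m) = r := by simp [bb]

lemma bb_mem (m j : ℕ) (hj : 2 ≤ j) (hjm : j ≤ m) (n : ℕ) (hn : j ≤ n) :
    bb m j 1 ∈ latPts (dil n (Pdj (m+1) j)) := by
  rw [mem_lat_iff m j (by omega) hjm]
  refine ⟨1, hj, Pi.single 0 (n - j), ?_, ?_⟩
  · simp [ss]; omega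
  · simp [pp, Fin.sum_univ_succ, VV]

lemma not_decomp (m j : ℕ) (hj : 2 ≤ j) (hjm : j ≤ m) (k n : ℕ) (hk : k < j)
    (f : Fin n → Pt (m+1)) (hf : ∀ i, f i ∈ latPts (dil k (Pdj (m+1) j)))
    (h : bb m j 1 = ∑ i, f i) : False := by
  have hh : ∀ i, ∃ h : ℕ, f i (Fin.last m) = h := fun i => height_nat m j (by omega) hjm (hf i)
  choose h' hh using hh
  have h1 := congrFun h (Fin.last m)
  rw [bb_last, Finset.sum_apply] at h1
  simp only [hh] at h1
  have h1 : 1 = ∑ i, h' i := by exact_mod_cast h1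
  obtain ⟨i, -, hi⟩ := Finset.exists_ne_zero_of_sum_ne_zero (s := Finset.univ) (f := h') (by omega)
  have := Finset.single_le_sum (f := h') (fun i _ => Nat.zero_le _) (Finset.mem_univ i)
  have : h' i = 1 := by omega
  have := height_one m j hj hjm (hf i) (by rw [hh, this]; simp)
  omega

lemma not_va (m j : ℕ) (hj : 2 ≤ j) (hjm : j ≤ m) (k : ℕ) (hk1 : 1 ≤ k) (hk : k < j) :
    ¬ VeryAmple (dil k (Pdj (m+1) j)) := by
  rintro ⟨k₀, h⟩
  have hm := bb_mem m j hj hjm ((k₀ + j) * k) ((Nat.le_mul_of_pos_right j hk1).trans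
    (Nat.mul_le_mul_right k (by omega)))
  rw [← dil_dil] at hm
  obtain ⟨f, hf, hs⟩ := h (k₀ + j) (by omega) _ hm
  exact not_decomp m j hj hjm k _ hk f hf hs

lemma va_of_idp {N : ℕ} {P : Set (Pt N)} (h : HasIDP P) : VeryAmple P :=
  ⟨1, fun k hk => h k hk⟩

lemma mem_cone (m j : ℕ) (hj : 0 < j) (hjm : j ≤ m) (p : Pt (m+1) × ℝ) :
    p ∈ coneLat (Pdj (m+1) j) ↔ ∃ N : ℕ, p.2 = N ∧ p.1 ∈ latPts (dil N (Pdj (m+1) j)) := by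
  constructor
  · rintro ⟨⟨M, c, w, hcw, h1, h2⟩, hl, z, hz⟩
    have hz0 : (0:ℝ) ≤ z := by
      rw [← hz, h2]; exact Finset.sum_nonneg fun i _ => (hcw i).1
    have hz0 : 0 ≤ z := by exact_mod_cast hz0
    lift z to ℕ using hz0
    refine ⟨z, by simpa using hz, ?_, hl⟩
    rw [mem_dil_iff m j hj hjm]
    intro e
    have : ((p.1, (z:ℝ)) : Pt (m+1) × ℝ) = ∑ i, c i • ((w i, 1) : Pt (m+1) × ℝ) := by
      refine Prod.ext ?_ ?_
      · simp [Prod.fst_sum, h1]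
      · have : (z:ℝ) = p.2 := by simpa using hz.symm
        simp [Prod.snd_sum, this, h2]
    rw [this, ← LM_apply, map_sum]
    refine Finset.sum_nonneg fun i _ => ?_
    rw [map_smul, LM_apply, smul_eq_mul]
    exact mul_nonneg (hcw i).1 (LL_nonneg_of_mem m j hj hjm (hcw i).2 e)
  · rintro ⟨N, hN, ⟨y, hy, hyx⟩, hl⟩
    refine ⟨⟨1, fun _ => N, fun _ => y, fun _ => ⟨by simp, hy⟩, ?_, ?_⟩, hl, N, by simpa using hN⟩
    · simpa using hyx.symm
    · simpa using hN

lemma cc_ext (m j : ℕ) (hj : 0 < j) (hjm : j ≤ m) (x y : Pt (m+1))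
    (h : ∀ k, cc m j k x = cc m j k y) : x = y := by
  rw [← sum_cc_V0 m j hj hjm x, ← sum_cc_V0 m j hj hjm y]; simp [h]

lemma pp_inj (m j : ℕ) (hj : 0 < j) (hjm : j ≤ m) {r r' : ℕ} (hr : r < j) (hr' : r' < j)
    {a a' : Fin (m+1+1) → ℕ} (hs : ss j r + ∑ e, a e = ss j r' + ∑ e, a' e)
    (h : pp m j r a = pp m j r' a') : r = r' ∧ a = a' := by
  have h1 := congrFun h (Fin.last m)
  rw [last_pp m j hj hjm, last_pp m j hj hjm] at h1
  have h1 : r + j * a (Fin.last m).succ = r' + j * a' (Fin.last m).succ := by exact_mod_cast h1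
  have h2 := congrArg (· % j) h1
  simp [Nat.mod_eq_of_lt hr, Nat.mod_eq_of_lt hr'] at h2
  subst h2
  refine ⟨rfl, ?_⟩
  funext e
  have e1 := LL_pp m j hj hjm r a e
  rw [h, hs, LL_pp m j hj hjm] at e1
  have : (a' e : ℝ) = a e := by linarith
  exact_mod_cast this.symm

lemma latPts_eq (m j : ℕ) (hj : 0 < j) (hjm : j ≤ m) (n : ℕ) :
    latPts (dil n (Pdj (m+1) j)) =
      (((Finset.range j).sigma fun r => if ss j r ≤ n then
        Finset.piAntidiag (Finset.univ : Finset (Fin (m+1+1))) (n - ss j r) else ∅).image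
        fun q => pp m j q.1 q.2 : Finset (Pt (m+1))) := by
  ext x
  rw [mem_lat_iff m j hj hjm]
  simp only [Finset.coe_image, Set.mem_image, Finset.mem_coe, Finset.mem_sigma, Finset.mem_range]
  constructor
  · rintro ⟨r, hr, a, hs, rfl⟩
    refine ⟨⟨r, a⟩, ⟨hr, ?_⟩, rfl⟩
    dsimp only
    rw [if_pos (by omega), Finset.mem_piAntidiag]
    refine ⟨?_, by simp⟩
    show ∑ e, a e = n - ss j r
    omega
  · rintro ⟨⟨r, a⟩, ⟨hr, ha⟩, rfl⟩
    refine ⟨r, hr, a, ?_, rfl⟩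
    dsimp only at ha
    split_ifs at ha with h
    · rw [Finset.mem_piAntidiag] at ha
      have : ∑ e, a e = n - ss j r := ha.1
      omega
    · simp at ha

lemma lat_finite (m j : ℕ) (hj : 0 < j) (hjm : j ≤ m) (n : ℕ) :
    (latPts (dil n (Pdj (m+1) j))).Finite := by
  rw [latPts_eq m j hj hjm]; exact Finset.finite_toSet _

lemma card_piA (d n : ℕ) :
    (Finset.piAntidiag (Finset.univ : Finset (Fin (d+1))) n).card = (d + n).choose d := by
  rw [← Finset.map_sym_eq_piAntidiag, Finset.card_map, Finset.sym_univ, Finset.card_univ,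
    Sym.card_sym_eq_choose]
  simp
  rw [Nat.choose_symm_add]

lemma ehr_eq (m j : ℕ) (hj : 0 < j) (hjm : j ≤ m) (n : ℕ) :
    ehr (Pdj (m+1) j) n = ∑ r ∈ Finset.range j,
      if ss j r ≤ n then (m + 1 + (n - ss j r)).choose (m+1) else 0 := by
  rw [ehr, latPts_eq m j hj hjm, Set.ncard_coe_finset, Finset.card_image_of_injOn, Finset.card_sigma]
  · refine Finset.sum_congr rfl fun r _ => ?_
    split_ifs
    · exact card_piA _ _
    · simp
  · rintro ⟨r, a⟩ h ⟨r', a'⟩ h' hh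
    simp only [Finset.coe_sigma, Set.mem_sigma_iff, Finset.mem_coe, Finset.mem_range] at h h'
    obtain ⟨hr, ha⟩ := h
    obtain ⟨hr', ha'⟩ := h'
    dsimp only at hr ha hr' ha' hh
    split_ifs at ha ha' with h1 h2 h3
    · rw [Finset.mem_piAntidiag] at ha ha'
      have e1 : ∑ e, a e = n - ss j r := ha.1
      have e2 : ∑ e, a' e = n - ss j r' := ha'.1
      obtain ⟨rfl, rfl⟩ := pp_inj m j hj hjm hr hr' (by omega) hh
      rfl
    all_goals simp_all

open PowerSeries in
lemma delta_coeff (P : ℕ → ℕ) (d i : ℕ) :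
    ∑ k ∈ Finset.range (i+1), (-1)^k * ((d+1).choose k) * (P (i - k) : ℤ) =
      coeff i ((1 - X : PowerSeries ℤ)^(d+1) * PowerSeries.mk fun n => (P n : ℤ)) := by
  rw [coeff_mul, Finset.Nat.sum_antidiagonal_eq_sum_range_succ_mk]
  refine Finset.sum_congr rfl fun k _ => ?_
  simp only [coeff_mk]
  congr 1
  have h := Polynomial.coeff_one_add_X_pow ℤ (d+1) k
  have h2 : ((1 - X : PowerSeries ℤ)^(d+1)) =
      rescale (-1 : ℤ) (((1 + Polynomial.X : Polynomial ℤ)^(d+1) : Polynomial ℤ) : PowerSeries ℤ) := by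
    simp [sub_eq_add_neg]
  rw [h2, coeff_rescale, Polynomial.coeff_coe, h]

open PowerSeries in
lemma delta_eq (m j : ℕ) (hj : 0 < j) (hjm : j ≤ m) (i : ℕ) :
    deltaVec (Pdj (m+1) j) (m+1) i = ∑ r ∈ Finset.range j, if i = ss j r then 1 else 0 := by
  rw [deltaVec, delta_coeff]
  have : (PowerSeries.mk fun n => (ehr (Pdj (m+1) j) n : ℤ)) = ∑ r ∈ Finset.range j,
      (X : PowerSeries ℤ)^(ss j r) * PowerSeries.mk fun n => ((m + 1 + n).choose (m+1) : ℤ) := by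
    ext n
    rw [map_sum, coeff_mk, ehr_eq m j hj hjm]
    push_cast
    refine Finset.sum_congr rfl fun r _ => ?_
    rw [coeff_X_pow_mul']
    simp
  rw [this, Finset.mul_sum, map_sum]
  refine Finset.sum_congr rfl fun r _ => ?_
  rw [mul_left_comm, mul_comm ((1 - X : PowerSeries ℤ)^_), mk_add_choose_mul_one_sub_pow_eq_one,
    mul_one, coeff_X_pow]

lemma bb_irred (m j : ℕ) (hj : 2 ≤ j) (hjm : j ≤ m) (p q : Pt (m+1) × ℝ)
    (hp : p ∈ coneLat (Pdj (m+1) j)) (hq : q ∈ coneLat (Pdj (m+1) j))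
    (h : p + q = (bb m j 1, (j:ℝ))) : p = 0 ∨ q = 0 := by
  have hj0 : 0 < j := by omega
  have main : ∀ p q : Pt (m+1) × ℝ, p ∈ coneLat (Pdj (m+1) j) → q ∈ coneLat (Pdj (m+1) j) →
      p + q = (bb m j 1, (j:ℝ)) → p.1 (Fin.last m) = 1 → q = 0 := by
    intro p q hp hq h h1
    rw [mem_cone m j hj0 hjm] at hp hq
    obtain ⟨N, hN, hpN⟩ := hp
    obtain ⟨M, hM, hqM⟩ := hq
    have hjN := height_one m j hj hjm hpN h1
    have h2 := congrArg Prod.snd h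
    simp only [Prod.snd_add, hN, hM] at h2
    have h2 : N + M = j := by exact_mod_cast h2
    have : M = 0 := by omega
    subst this
    obtain ⟨⟨y, hy, hyq⟩, -⟩ := hqM
    refine Prod.ext ?_ ?_
    · simpa using hyq.symm
    · simpa using hM
  obtain ⟨N, hN, hpN⟩ := (mem_cone m j hj0 hjm _).1 hp
  obtain ⟨M, hM, hqM⟩ := (mem_cone m j hj0 hjm _).1 hq
  obtain ⟨a, ha⟩ := height_nat m j hj0 hjm hpN
  obtain ⟨b, hb⟩ := height_nat m j hj0 hjm hqM
  have h1 := congrFun (congrArg Prod.fst h) (Fin.last m)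
  simp only [Prod.fst_add, Pi.add_apply, ha, hb, bb_last] at h1
  have h1 : a + b = 1 := by exact_mod_cast h1
  rcases (by omega : a = 1 ∨ b = 1) with rfl | rfl
  · right; exact main p q hp hq h (by simpa using ha)
  · left; exact main q p hq hp ((add_comm q p).trans h) (by simpa using hb)

lemma cone_add (m j : ℕ) (hj : 0 < j) (hjm : j ≤ m) {p q : Pt (m+1) × ℝ}
    (hp : p ∈ coneLat (Pdj (m+1) j)) (hq : q ∈ coneLat (Pdj (m+1) j)) :
    p + q ∈ coneLat (Pdj (m+1) j) := by
  rw [mem_cone m j hj hjm] at *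
  obtain ⟨N, hN, hpN⟩ := hp
  obtain ⟨M, hM, hqM⟩ := hq
  exact ⟨N + M, by simp [hN, hM], lat_add m j hj hjm hpN hqM⟩

lemma hilb (m j : ℕ) (hj : 2 ≤ j) (hjm : j ≤ m) (H : Set (Pt (m+1) × ℝ))
    (hH : IsMinHilbertBasis (Pdj (m+1) j) H) : IsGreatest {t : ℝ | ∃ p ∈ H, p.2 = t} (j : ℝ) := by
  have hj0 : 0 < j := by omega
  obtain ⟨⟨-, hsub, hgen⟩, hmin⟩ := hH
  constructor
  · refine ⟨(bb m j 1, (j:ℝ)), ?_, rfl⟩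
    have hb : ((bb m j 1, (j:ℝ)) : Pt (m+1) × ℝ) ∈ coneLat (Pdj (m+1) j) :=
      (mem_cone m j hj0 hjm _).2 ⟨j, rfl, bb_mem m j hj hjm j le_rfl⟩
    have hne : ((bb m j 1, (j:ℝ)) : Pt (m+1) × ℝ) ≠ 0 := by
      intro h
      have := congrArg Prod.snd h
      simp at this; omega
    have hcl : ∀ p ∈ AddSubmonoid.closure H, p ∈ coneLat (Pdj (m+1) j) ∧
        (p = (bb m j 1, (j:ℝ)) → p ∈ H) := by
      intro p hp
      induction hp using AddSubmonoid.closure_induction with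
      | mem x hx => exact ⟨hsub hx, fun _ => hx⟩
      | zero =>
        exact ⟨(mem_cone m j hj0 hjm _).2 ⟨0, by simp, zero_lat m j hj0 hjm⟩,
          fun h => absurd h.symm hne⟩
      | add x y _ _ hx hy =>
        refine ⟨cone_add m j hj0 hjm hx.1 hy.1, fun h => ?_⟩
        rcases bb_irred m j hj hjm x y hx.1 hy.1 h with rfl | rfl
        · rw [zero_add] at h ⊢; exact hy.2 h
        · rw [add_zero] at h ⊢; exact hx.2 h
    exact (hcl _ (hgen hb)).2 rfl
  · rintro t ⟨p, hp, rfl⟩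
    have := hmin {p | p ∈ coneLat (Pdj (m+1) j) ∧ p.2 ≤ j} ⟨?_, fun p hp => hp.1, ?_⟩ hp
    · exact this.2
    · refine Set.Finite.subset (Set.Finite.biUnion (Finset.range (j+1)).finite_toSet
        (t := fun n => (latPts (dil n (Pdj (m+1) j))) ×ˢ {(n:ℝ)}) fun n _ =>
          (lat_finite m j hj0 hjm n).prod (Set.finite_singleton _)) ?_
      rintro ⟨x, t⟩ ⟨hp, hpj⟩
      obtain ⟨N, hN, hpN⟩ := (mem_cone m j hj0 hjm _).1 hp
      simp only at hN hpN hpj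
      subst hN
      have : N ≤ j := by exact_mod_cast hpj
      simp only [Set.mem_iUnion]
      exact ⟨N, by simp; omega, hpN, rfl⟩
    · intro p hp
      obtain ⟨N, hN, hpN⟩ := (mem_cone m j hj0 hjm _).1 hp
      clear hp
      obtain ⟨x, t⟩ := p
      simp only at hN hpN
      subst hN
      induction N generalizing x with
      | zero =>
        exact AddSubmonoid.subset_closure ⟨(mem_cone m j hj0 hjm _).2 ⟨0, rfl, hpN⟩, by simp⟩
      | succ N ih =>
        by_cases h : N + 1 ≤ j
        · refine AddSubmonoid.subset_closure ⟨(mem_cone m j hj0 hjm _).2 ⟨N+1, rfl, hpN⟩, ?_⟩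
          show ((N + 1 : ℕ) : ℝ) ≤ j
          exact_mod_cast h
        · obtain ⟨e, y, hy, rfl⟩ := key m j hj0 hjm N (by omega) x hpN
          have h1 := ih y hy
          have h2 : ((VV m j e, 1) : Pt (m+1) × ℝ) ∈
              AddSubmonoid.closure {p | p ∈ coneLat (Pdj (m+1) j) ∧ p.2 ≤ (j:ℝ)} := by
            refine AddSubmonoid.subset_closure ⟨(mem_cone m j hj0 hjm _).2
              ⟨1, by simp, VV_lat m j hjm e⟩, ?_⟩
            show (1:ℝ) ≤ j
            exact_mod_cast hj0
          have h3 := AddSubmonoid.add_mem _ h1 h2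
          have : ((y + VV m j e, ((N+1:ℕ):ℝ)) : Pt (m+1) × ℝ) = (y, (N:ℝ)) + (VV m j e, 1) := by
            ext <;> simp
          rw [this]; exact h3

lemma latP_eq (m j : ℕ) (hj : 2 ≤ j) (hjm : j ≤ m) {x : Pt (m+1)}
    (hx : x ∈ latPts (Pdj (m+1) j)) : ∃ e, x = VV m j e := by
  rw [← Pdj_eq, mem_lat_iff m j (by omega) hjm] at hx
  obtain ⟨r, hr, a, hs, rfl⟩ := hx
  have : r = 0 := by
    by_contra h
    simp only [ss, h, if_false] at hs
    omega
  subst this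
  simp only [ss, if_true, zero_add] at hs
  obtain ⟨e, -, he⟩ := Finset.exists_ne_zero_of_sum_ne_zero (s := Finset.univ) (f := a) (by omega)
  refine ⟨e, ?_⟩
  have ha : ∀ f, f ≠ e → a f = 0 := by
    intro f hf
    have := Finset.add_le_sum (f := a) (s := Finset.univ) (fun i _ => Nat.zero_le _)
      (Finset.mem_univ f) (Finset.mem_univ e) hf
    omega
  have he1 : a e = 1 := by
    have := Finset.single_le_sum (f := a) (fun i _ => Nat.zero_le _) (Finset.mem_univ e)
    omega
  have hb : bb m j 0 = 0 := by funext k; simp [bb]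
  rw [pp, hb, zero_add, Finset.sum_eq_single e]
  · simp [he1]
  · intro f _ hf; simp [ha f hf]
  · simp

lemma affInd_VV (m j : ℕ) (hj : 0 < j) (hjm : j ≤ m) : AffineIndependent ℝ (VV m j) := by
  rw [affineIndependent_iff]
  intro s w h1 h2 e he
  have : ∑ f ∈ s, w f • ((VV m j f, 1) : Pt (m+1) × ℝ) = 0 := by
    refine Prod.ext ?_ ?_
    · simpa [Prod.fst_sum] using h2
    · simpa [Prod.snd_sum] using h1
  have h := congrArg (LM m j e) this
  rw [map_sum, map_zero] at h
  simp only [map_smul, LM_apply, LL_VV m j hj hjm] at h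
  simpa [he] using h

lemma box_ge (m j : ℕ) (hj : 2 ≤ j) (hjm : j ≤ m) :
    (bb m j 1, (j:ℝ)) ∈ boxP (Pdj (m+1) j) (m+1) := by
  have hj0 : 0 < j := by omega
  refine ⟨?_, ?_⟩
  · simp only [Set.mem_iUnion]
    refine ⟨VV m j, ⟨fun e => ?_, affInd_VV m j hj0 hjm, ?_⟩, ?_⟩
    · exact ⟨VV_mem m j hjm e, isLat_VV m j e⟩
    · intro x hx hl
      rw [range_VV m j hjm] at hx
      obtain ⟨e, rfl⟩ := latP_eq m j hj hjm ⟨hx, hl⟩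
      exact ⟨e, rfl⟩
    · refine ⟨fun e => LL m j e (bb m j 1, (j:ℝ)), fun e => ?_, ?_, ?_, isLat_bb m j 1, j, by simp⟩
      · have := LL_bb m j 1 hj hjm e
        simpa [ss] using this
      · exact (sum_LL_VV m j hj0 hjm _).symm
      · exact (sum_LL m j _).symm
  · rintro ⟨n, f, hf, h1, -⟩
    refine not_decomp m j hj hjm 1 n (by omega) f ?_ h1
    rwa [Pdj_eq]

lemma box_le (m j : ℕ) (hj : 2 ≤ j) (hjm : j ≤ m) (p : Pt (m+1) × ℝ)
    (hp : p ∈ boxP (Pdj (m+1) j) (m+1)) : p.2 ≤ j := by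
  have hj0 : 0 < j := by omega
  obtain ⟨hp, -⟩ := hp
  simp only [Set.mem_iUnion] at hp
  obtain ⟨v, ⟨hv, hvi, -⟩, r, hr, h1, h2, hl, z, hz⟩ := hp
  have hcone : p ∈ coneLat (Pdj (m+1) j) :=
    ⟨⟨m+1+1, r, v, fun i => ⟨(hr i).1, (hv i).1⟩, h1, h2⟩, hl, z, hz⟩
  obtain ⟨N, hN, hpN⟩ := (mem_cone m j hj0 hjm _).1 hcone
  by_contra hlt
  rw [hN, not_le] at hlt
  have hlt : j < N := by exact_mod_cast hlt
  obtain ⟨N, rfl⟩ : ∃ M, N = M + 1 := ⟨N - 1, by omega⟩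
  obtain ⟨e, y, hy, hxy⟩ := key m j hj0 hjm N (by omega) p.1 hpN
  have hge : 1 ≤ LL m j e p := by
    have : p = (y, (N:ℝ)) + (VV m j e, 1) := by
      refine Prod.ext ?_ ?_
      · simpa using hxy
      · simp [hN]
    rw [this, LL_add, LL_VV m j hj0 hjm]
    have := (mem_dil_iff m j hj0 hjm N y).1 hy.1 e
    simp; linarith
  have hlt1 : LL m j e p < 1 := by
    have hpe : p = ∑ i, r i • ((v i, 1) : Pt (m+1) × ℝ) := by
      refine Prod.ext ?_ ?_
      · simpa [Prod.fst_sum] using h1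
      · simpa [Prod.snd_sum] using h2
    choose g hg using fun i => latP_eq m j hj hjm (hv i)
    have hginj : Function.Injective g := by
      intro a b hab
      apply hvi.injective
      rw [hg, hg, hab]
    rw [hpe, ← LM_apply, map_sum]
    simp only [map_smul, LM_apply, hg, LL_VV m j hj0 hjm, smul_eq_mul]
    by_cases hex : ∃ i, g i = e
    · obtain ⟨i, rfl⟩ := hex
      rw [Finset.sum_eq_single i]
      · simpa using (hr i).2
      · intro b _ hb
        have : g i ≠ g b := fun h => hb (hginj h).symm
        simp [this]
      · simp
    · rw [Finset.sum_eq_zero]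
      · norm_num
      · intro i _
        have : e ≠ g i := fun h => hex ⟨i, h.symm⟩
        simp [this]
  linarith

lemma delta_greatest (m j : ℕ) (hj : 2 ≤ j) (hjm : j ≤ m) :
    IsGreatest {i : ℕ | i ≤ m + 1 ∧ deltaVec (Pdj (m+1) j) (m+1) i ≠ 0} j := by
  have hj0 : 0 < j := by omega
  constructor
  · refine ⟨by omega, ?_⟩
    rw [delta_eq m j hj0 hjm]
    have := Finset.single_le_sum (f := fun r => if j = ss j r then (1:ℤ) else 0)
      (s := Finset.range j) (fun i _ => by split_ifs <;> norm_num) (Finset.mem_range.2 hj)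
    simp [ss] at this
    simp [ss]
    omega
  · rintro i ⟨-, hi⟩
    by_contra h
    apply hi
    rw [delta_eq m j hj0 hjm]
    apply Finset.sum_eq_zero
    intro r hr
    have := ss_le j r (Finset.mem_range.1 hr)
    rw [if_neg (by omega)]

/-- for `1 ≤ k < j` the dilation `k·P(d,j)` is not very ample, and all
six invariants `μ_va, μ_midp, μ_idp, μ_Hilb, μ_hole, μ_Ehr` of `P(d,j)` equal `j`. -/
theorem all_invariants_eq_j (d j : ℕ) (hd : 3 ≤ d) (hj2 : 2 ≤ j) (hjd : j ≤ d - 1) :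
    (∀ k, 1 ≤ k → k < j → ¬ VeryAmple (dil k (Pdj d j))) ∧
    IsLeast {k : ℕ | 0 < k ∧ VeryAmple (dil k (Pdj d j))} j ∧
    IsLeast {k : ℕ | 0 < k ∧ HasIDP (dil k (Pdj d j))} j ∧
    IsLeast {k : ℕ | 0 < k ∧ ∀ n, k ≤ n → HasIDP (dil n (Pdj d j))} j ∧
    (∀ H, IsMinHilbertBasis (Pdj d j) H →
      IsGreatest {t : ℝ | ∃ p ∈ H, p.2 = t} (j : ℝ)) ∧
    IsGreatest {t : ℝ | ∃ p ∈ boxP (Pdj d j) d, p.2 = t} (j : ℝ) ∧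
    IsGreatest {i : ℕ | i ≤ d ∧ deltaVec (Pdj d j) d i ≠ 0} j := by 
  obtain ⟨m, rfl⟩ : ∃ m, d = m + 1 := ⟨d - 1, by omega⟩
  have hjm : j ≤ m := by omega
  have hj0 : 0 < j := by omega
  have hidp := hasIDP_of_le m j hj0 hjm
  refine ⟨not_va m j hj2 hjm, ⟨⟨hj0, va_of_idp (hidp j le_rfl)⟩, ?_⟩, ⟨⟨hj0, hidp j le_rfl⟩, ?_⟩,
    ⟨⟨hj0, hidp⟩, ?_⟩, hilb m j hj2 hjm, ⟨⟨_, box_ge m j hj2 hjm, rfl⟩, ?_⟩,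
    delta_greatest m j hj2 hjm⟩
  · rintro k ⟨hk, h⟩
    by_contra hlt
    exact not_va m j hj2 hjm k hk (by omega) h
  · rintro k ⟨hk, h⟩
    by_contra hlt
    exact not_va m j hj2 hjm k hk (by omega) (va_of_idp h)
  · rintro k ⟨hk, h⟩
    by_contra hlt
    exact not_va m j hj2 hjm k hk (by omega) (va_of_idp (h k le_rfl))
  · rintro t ⟨p, hp, rfl⟩
    exact box_le m j hj2 hjm p hp
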